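/- arXiv:2011.01814 — 9 statements merged into one kernel-verified Lean document; each statement's English description precedes it below -/
import Mathlib

section
/- Assume the PUs are sorted. Then no saturated PU appears after a non-saturated PU: for all indices i ≤ j ≤ k−1, if PU i is non-saturated then PU j is non-saturated. (Lemma 1 of the paper.) -/
theorem stmt_0
    (k : ℕ) (hk : 1 ≤ k) (n : ℝ) (hn : 0 < n)
    (c m : ℕ → ℝ)
    (hc : ∀ i < k, 0 < c i) (hm : ∀ i < k, 0 < m i)
    (S L desW tw : ℕ → ℝ)
    (hS : ∀ i ≤ k, S i = ∑ j ∈ Finset.Ico i k, c j)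
    (hL0 : L 0 = n)
    (hdesW : ∀ i < k, desW i = c i * L i / S i)
    (htw : ∀ i < k, tw i = min (desW i) (m i))
    (hLrec : ∀ i < k, L (i + 1) = L i - tw i)
    (hsorted : ∀ i j, i ≤ j → j < k → c i / m i ≥ c j / m j)
    (i j : ℕ) (hij : i ≤ j) (hjk : j < k)
    (hi_nonsat : desW i ≤ m i) :
    desW j ≤ m j := by
  induction j, hij using Nat.le_induction with
  | base => exact hi_nonsat
  | succ j hij ih =>
    have hj : j < k := by omega
    have h := ih hj
    have hSpos : ∀ a < k, 0 < S a := by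
      intro a ha
      rw [hS a ha.le]
      apply Finset.sum_pos
      · intro b hb
        exact hc b (Finset.mem_Ico.mp hb).2
      · exact ⟨a, Finset.mem_Ico.mpr ⟨le_rfl, ha⟩⟩
    have hSrec : S j = c j + S (j + 1) := by
      rw [hS j hj.le, hS (j + 1) hjk.le, Finset.sum_eq_sum_Ico_succ_bot hj]
    have h1 := hSpos j hj
    have h2 := hSpos (j + 1) hjk
    have hcj := hc j hj
    have hcj' := hc (j + 1) hjk
    have hs := hsorted j (j + 1) (by omega) hjk
    rw [ge_iff_le, div_le_div_iff₀ (hm _ hjk) (hm _ hj)] at hs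
    have hL : L (j + 1) = (L j / S j) * S (j + 1) := by
      rw [hLrec j hj, htw j hj, min_eq_left h, hdesW j hj]
      have : S (j + 1) = S j - c j := by linarith
      rw [this]
      field_simp
    have hd : desW (j + 1) = c (j + 1) * (L j / S j) := by
      rw [hdesW _ hjk, hL]
      field_simp
    rw [hdesW j hj, mul_div_assoc] at h
    rw [hd]
    have h3 := mul_le_mul_of_nonneg_left h hcj'.le
    refine le_of_mul_le_mul_left ?_ hcj
    linarith
end

section
/- Assume the PUs are sorted and let PU d (0 ≤ d ≤ k−1) be non-saturated. Then every PU j with d ≤ j ≤ k−1 receives a load proportionate to its speed relative to the state at iteration d: tw j · S d = c j · L d, i.e., tw j / c j = L d / S d. (The inductive core of the proof of Theorem 1.) -/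
theorem stmt_6
    (k : ℕ) (hk : 1 ≤ k) (n : ℝ) (hn : 0 < n)
    (c m : ℕ → ℝ)
    (hc : ∀ i < k, 0 < c i) (hm : ∀ i < k, 0 < m i)
    (S L desW tw : ℕ → ℝ)
    (hS : ∀ i ≤ k, S i = ∑ j ∈ Finset.Ico i k, c j)
    (hL0 : L 0 = n)
    (hdesW : ∀ i < k, desW i = c i * L i / S i)
    (htw : ∀ i < k, tw i = min (desW i) (m i))
    (hLrec : ∀ i < k, L (i + 1) = L i - tw i)
    (hsorted : ∀ i j, i ≤ j → j < k → c i / m i ≥ c j / m j)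
    (d : ℕ) (hdk : d < k) (hd_nonsat : desW d ≤ m d)
    (j : ℕ) (hdj : d ≤ j) (hjk : j < k) :
    tw j * S d = c j * L d ∧ tw j / c j = L d / S d := by
  have hSpos : ∀ i < k, 0 < S i := by
    intro i hi
    rw [hS i hi.le]
    apply Finset.sum_pos
    · intro x hx
      exact hc x (Finset.mem_Ico.mp hx).2
    · exact ⟨i, Finset.mem_Ico.mpr ⟨le_rfl, hi⟩⟩
  have hSrec : ∀ i < k, S i = c i + S (i + 1) := by
    intro i hi
    rw [hS i hi.le, hS (i + 1) hi, Finset.sum_eq_sum_Ico_succ_bot hi]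
  obtain ⟨r, hr⟩ : ∃ r, r = L d / S d := ⟨_, rfl⟩
  have hSd := hSpos d hdk
  have hLd : L d = r * S d := by
    rw [hr]; field_simp
  have hdes : ∀ i < k, L i = r * S i → desW i = c i * r := by
    intro i hi h
    have := hSpos i hi
    rw [hdesW i hi, h]; field_simp
  have hrd : c d * r ≤ m d := by
    rw [← hdes d hdk hLd]; exact hd_nonsat
  have htw' : ∀ i, d ≤ i → i < k → L i = r * S i → tw i = c i * r := by
    intro i hdi hi h
    rw [htw i hi, hdes i hi h]
    apply min_eq_left
    have h1 := hsorted d i hdi hi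
    have hcd := hc d hdk
    have hci := hc i hi
    have hmd := hm d hdk
    have hmi := hm i hi
    rw [ge_iff_le, div_le_div_iff₀ hmi hmd] at h1
    have h2 : c d * (c i * r) ≤ c d * m i := by
      calc c d * (c i * r) = c i * (c d * r) := by ring
        _ ≤ c i * m d := mul_le_mul_of_nonneg_left hrd hci.le
        _ ≤ c d * m i := h1
    exact le_of_mul_le_mul_left h2 hcd
  have hinv : ∀ i, d ≤ i → i < k → L i = r * S i := by
    intro i hdi
    induction i, hdi using Nat.le_induction with
    | base => intro _; exact hLd
    | succ i hdi ih =>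
      intro hi
      have hi' : i < k := by omega
      have h := ih hi'
      rw [hLrec i hi', htw' i hdi hi' h, h, hSrec i hi']
      ring
  have ht := htw' j hdj hjk (hinv j hdj hjk)
  have hcj := hc j hjk
  refine ⟨?_, ?_⟩
  · rw [ht, hLd]; ring
  · rw [ht, ← hr]; field_simp
end

section
/- Saturated steps strictly increase the load-to-speed ratio: if 0 ≤ i ≤ k−2 and PU i is saturated, then L (i+1) · S i > L i · S (i+1), i.e., L (i+1) / S (i+1) > L i / S i. -/
theorem stmt_8
    (k : ℕ) (hk : 1 ≤ k) (n : ℝ) (hn : 0 < n)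
    (c m : ℕ → ℝ)
    (hc : ∀ i < k, 0 < c i) (hm : ∀ i < k, 0 < m i)
    (S L desW tw : ℕ → ℝ)
    (hS : ∀ i ≤ k, S i = ∑ j ∈ Finset.Ico i k, c j)
    (hL0 : L 0 = n)
    (hdesW : ∀ i < k, desW i = c i * L i / S i)
    (htw : ∀ i < k, tw i = min (desW i) (m i))
    (hLrec : ∀ i < k, L (i + 1) = L i - tw i)
    (hsorted : ∀ i j, i ≤ j → j < k → c i / m i ≥ c j / m j)
    (i : ℕ) (hik : i + 1 < k) (hsat : desW i > m i) :
    L (i + 1) * S i > L i * S (i + 1) ∧ L (i + 1) / S (i + 1) > L i / S i := by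
  have hi : i < k := by omega
  have hS1 : 0 < S (i + 1) := by
    rw [hS (i + 1) hik.le]
    apply Finset.sum_pos
    · intro j hj
      exact hc j (Finset.mem_Ico.mp hj).2
    · exact ⟨i + 1, Finset.mem_Ico.mpr ⟨le_rfl, hik⟩⟩
  have hSi : S i = c i + S (i + 1) := by
    rw [hS i hi.le, hS (i + 1) hik.le, Finset.sum_eq_sum_Ico_succ_bot hi]
  have hci := hc i hi
  have hS0 : 0 < S i := by linarith
  have hL : L (i + 1) = L i - m i := by
    rw [hLrec i hi, htw i hi, min_eq_right hsat.le]
  have hs : m i * S i < c i * L i := by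
    have h := hsat
    rw [hdesW i hi] at h
    exact (lt_div_iff₀ hS0).mp h
  have key : L i * S (i + 1) < L (i + 1) * S i := by
    have h2 : S (i + 1) = S i - c i := by linarith
    rw [hL, h2]
    nlinarith
  exact ⟨key, (div_lt_div_iff₀ hS0 hS1).mpr key⟩
end

section
/- Assume the PUs are sorted. If PU i is saturated and PU d is non-saturated (0 ≤ i, d ≤ k−1), then the normalized load of PU i is strictly smaller than that of PU d: tw i / c i < tw d / c d, equivalently m i · S d < c i · L d. -/
theorem stmt_9
    (k : ℕ) (hk : 1 ≤ k) (n : ℝ) (hn : 0 < n)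
    (c m : ℕ → ℝ)
    (hc : ∀ i < k, 0 < c i) (hm : ∀ i < k, 0 < m i)
    (S L desW tw : ℕ → ℝ)
    (hS : ∀ i ≤ k, S i = ∑ j ∈ Finset.Ico i k, c j)
    (hL0 : L 0 = n)
    (hdesW : ∀ i < k, desW i = c i * L i / S i)
    (htw : ∀ i < k, tw i = min (desW i) (m i))
    (hLrec : ∀ i < k, L (i + 1) = L i - tw i)
    (hsorted : ∀ i j, i ≤ j → j < k → c i / m i ≥ c j / m j)
    (i d : ℕ) (hik : i < k) (hdk : d < k)
    (hi_sat : desW i > m i) (hd_nonsat : desW d ≤ m d) :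
    tw i / c i < tw d / c d ∧ m i * S d < c i * L d := by
  have hSpos : ∀ j < k, 0 < S j := by
    intro j hj
    rw [hS j hj.le]
    apply Finset.sum_pos
    · intro a ha
      exact hc a (Finset.mem_Ico.mp ha).2
    · exact ⟨j, Finset.mem_Ico.mpr ⟨le_refl _, hj⟩⟩
  have hSrec : ∀ j < k, S j = c j + S (j + 1) := by
    intro j hj
    rw [hS j hj.le, hS (j + 1) hj, Finset.sum_eq_sum_Ico_succ_bot hj]
  have hr : ∀ j < k, ∃ r, L j = r * S j ∧ desW j = c j * r := by
    intro j hj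
    have := (hSpos j hj).ne'
    refine ⟨L j / S j, by field_simp, ?_⟩
    rw [hdesW j hj]
    ring
  have key : ∀ j, i ≤ j → j < k → m i * S j < c i * L j := by
    intro j hij
    induction j, hij using Nat.le_induction with
    | base =>
      intro hj
      rw [gt_iff_lt, hdesW i hj, lt_div_iff₀ (hSpos i hj)] at hi_sat
      exact hi_sat
    | succ j hij ih =>
      intro hj
      have hj' : j < k := by omega
      have h1 := ih hj'
      obtain ⟨r, hr1, hr2⟩ := hr j hj'
      have h2 : m i < c i * r := by
        have h3 : m i * S j < (c i * r) * S j := by rw [hr1] at h1; linarith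
        exact lt_of_mul_lt_mul_right h3 (hSpos j hj').le
      have h4 : tw j ≤ c j * r := by rw [htw j hj', ← hr2]; exact min_le_left _ _
      have h5 : r * S (j + 1) ≤ L (j + 1) := by
        rw [hLrec j hj', hr1, hSrec j hj']; linarith
      have h6 := mul_lt_mul_of_pos_right h2 (hSpos _ hj)
      have h7 := mul_le_mul_of_nonneg_left h5 (hc i hik).le
      linarith
  have hid : i ≤ d := by
    by_contra! hdi
    obtain ⟨r, hr1, hr2⟩ := hr d hdk
    have hns : ∀ j, d ≤ j → j < k → c j * r ≤ m j := by
      intro j hdj hj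
      have h := hsorted d j hdj hj
      rw [ge_iff_le, div_le_div_iff₀ (hm j hj) (hm d hdk)] at h
      rw [hr2] at hd_nonsat
      have h1 := mul_le_mul_of_nonneg_left hd_nonsat (hc j hj).le
      have h2 : c d * (c j * r) ≤ c d * m j := by linarith
      exact le_of_mul_le_mul_left h2 (hc d hdk)
    have hconst : ∀ j, d ≤ j → j < k → L j = r * S j := by
      intro j hdj
      induction j, hdj using Nat.le_induction with
      | base => intro _; exact hr1
      | succ j hdj ih =>
        intro hj
        have hj' : j < k := by omega
        have hL := ih hj'
        have hS0 := (hSpos j hj').ne'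
        have hd : desW j = c j * r := by
          rw [hdesW j hj', hL]; field_simp
        rw [hLrec j hj', htw j hj', hd, min_eq_left (hns j hdj hj'), hL, hSrec j hj']
        ring
    have h1 := key i le_rfl hik
    rw [hconst i hdi.le hik] at h1
    have h2 := mul_le_mul_of_nonneg_right (hns i hdi.le hik) (hSpos i hik).le
    linarith
  have hmain := key d hid hdk
  refine ⟨?_, hmain⟩
  obtain ⟨r, hr1, hr2⟩ := hr d hdk
  rw [htw i hik, htw d hdk, min_eq_right hi_sat.le, min_eq_left hd_nonsat, hr2,
    mul_div_cancel_left₀ _ (hc d hdk).ne', div_lt_iff₀ (hc i hik)]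
  have h3 : m i * S d < (r * c i) * S d := by rw [hr1] at hmain; linarith
  exact lt_of_mul_lt_mul_right h3 (hSpos d hdk).le
end

section
/- Assume the PUs are sorted, that at least one PU is non-saturated, and let d be the least index of a non-saturated PU. Then the maximum normalized load of the computed assignment equals the common value of the non-saturated PUs: max_{0 ≤ i ≤ k−1} (tw i / c i) = L d / S d = tw d / c d. -/
theorem stmt_10
    (k : ℕ) (hk : 1 ≤ k) (n : ℝ) (hn : 0 < n)
    (c m : ℕ → ℝ)
    (hc : ∀ i < k, 0 < c i) (hm : ∀ i < k, 0 < m i)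
    (S L desW tw : ℕ → ℝ)
    (hS : ∀ i ≤ k, S i = ∑ j ∈ Finset.Ico i k, c j)
    (hL0 : L 0 = n)
    (hdesW : ∀ i < k, desW i = c i * L i / S i)
    (htw : ∀ i < k, tw i = min (desW i) (m i))
    (hLrec : ∀ i < k, L (i + 1) = L i - tw i)
    (hsorted : ∀ i j, i ≤ j → j < k → c i / m i ≥ c j / m j)
    (d : ℕ) (hdk : d < k) (hd_nonsat : desW d ≤ m d)
    (hd_least : ∀ i < d, desW i > m i) :
    (Finset.range k).sup' (Finset.nonempty_range_iff.mpr (by omega))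
        (fun i => tw i / c i) = L d / S d ∧
    L d / S d = tw d / c d := by
  have hSrec : ∀ i < k, S i = c i + S (i + 1) := by
    intro i hi
    rw [hS i hi.le, hS (i + 1) hi, Finset.sum_eq_sum_Ico_succ_bot hi]
  have hSpos : ∀ i < k, 0 < S i := by
    intro i hi
    rw [hS i hi.le]
    apply Finset.sum_pos
    · intro j hj
      exact hc j (Finset.mem_Ico.mp hj).2
    · exact ⟨i, by simp [hi]⟩
  have hdes : ∀ i < k, desW i = c i * (L i / S i) := by
    intro i hi
    rw [hdesW i hi, mul_div_assoc]
  -- the ratios increase up to index d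
  have hstep : ∀ i < d, L i / S i ≤ L (i + 1) / S (i + 1) := by
    intro i hi
    have hik : i < k := by omega
    have h1 := hd_least i hi
    have h2 := hLrec i hik
    rw [htw i hik, min_eq_right h1.le] at h2
    rw [hdes i hik] at h1
    rw [le_div_iff₀ (hSpos (i + 1) (by omega)), h2]
    have h3 : L i / S i * S i = L i := div_mul_cancel₀ _ (hSpos i hik).ne'
    rw [hSrec i hik] at h3 h1 ⊢
    nlinarith
  have hmono : ∀ j ≤ d, ∀ i ≤ j, L i / S i ≤ L j / S j := by
    intro j
    induction j with
    | zero =>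
      intro _ i hi
      obtain rfl : i = 0 := by omega
      exact le_rfl
    | succ j ih =>
      intro hj i hi
      rcases Nat.lt_or_ge i (j + 1) with h | h
      · exact (ih (by omega) i (by omega)).trans (hstep j (by omega))
      · obtain rfl : i = j + 1 := by omega
        exact le_rfl
  have hcd := hc d hdk
  have htwd : tw d = c d * (L d / S d) := by
    rw [htw d hdk, min_eq_left hd_nonsat, hdes d hdk]
  have hnon : ∀ i, d ≤ i → i < k → c i * (L d / S d) ≤ m i := by
    intro i hdi hi
    have h1 := hsorted d i hdi hi
    rw [ge_iff_le, div_le_div_iff₀ (hm i hi) (hm d hdk)] at h1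
    have h2 := hd_nonsat
    rw [hdes d hdk] at h2
    have h3 := mul_le_mul_of_nonneg_left h2 (hc i hi).le
    refine le_of_mul_le_mul_left ?_ hcd
    linarith
  have hconst : ∀ i, d ≤ i → i < k → L i / S i = L d / S d := by
    intro i hdi
    induction i, hdi using Nat.le_induction with
    | base => intro _; rfl
    | succ i hdi ih =>
      intro hi
      have hik : i < k := by omega
      have e := ih hik
      have h2 := hLrec i hik
      have h3 : L i / S i * S i = L i := div_mul_cancel₀ _ (hSpos i hik).ne'
      rw [htw i hik, hdes i hik, e, min_eq_left (hnon i hdi hik)] at h2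
      rw [e, hSrec i hik] at h3
      rw [div_eq_iff (hSpos (i + 1) hi).ne', h2]
      linarith
  have hlast : L d / S d = tw d / c d := by
    rw [htwd, mul_div_cancel_left₀ _ hcd.ne']
  refine ⟨le_antisymm ?_ ?_, hlast⟩
  · apply Finset.sup'_le
    intro i hi
    have hik : i < k := Finset.mem_range.mp hi
    have hr : L i / S i ≤ L d / S d := by
      rcases Nat.lt_or_ge i d with h | h
      · exact hmono d le_rfl i h.le
      · exact (hconst i h hik).le
    rw [div_le_iff₀ (hc i hik), htw i hik]
    refine (min_le_left _ _).trans ?_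
    rw [hdes i hik, mul_comm]
    exact mul_le_mul_of_nonneg_right hr (hc i hik).le
  · rw [hlast]
    exact Finset.le_sup' (fun i => tw i / c i) (Finset.mem_range.mpr hdk)
end

section
/- Feasibility criterion: assume the PUs are sorted. If the total memory capacity suffices, i.e., ∑_{i=0}^{k−1} m i ≥ n, then PU (k−1) is non-saturated, and consequently ∑_{i=0}^{k−1} tw i = n. -/
theorem stmt_11
    (k : ℕ) (hk : 1 ≤ k) (n : ℝ) (hn : 0 < n)
    (c m : ℕ → ℝ)
    (hc : ∀ i < k, 0 < c i) (hm : ∀ i < k, 0 < m i)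
    (S L desW tw : ℕ → ℝ)
    (hS : ∀ i ≤ k, S i = ∑ j ∈ Finset.Ico i k, c j)
    (hL0 : L 0 = n)
    (hdesW : ∀ i < k, desW i = c i * L i / S i)
    (htw : ∀ i < k, tw i = min (desW i) (m i))
    (hLrec : ∀ i < k, L (i + 1) = L i - tw i)
    (hsorted : ∀ i j, i ≤ j → j < k → c i / m i ≥ c j / m j)
    (hmem : ∑ i ∈ Finset.range k, m i ≥ n) :
    desW (k - 1) ≤ m (k - 1) ∧ ∑ i ∈ Finset.range k, tw i = n := by
  have hSpos : ∀ i < k, 0 < S i := by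
    intro i hi
    rw [hS i hi.le]
    apply Finset.sum_pos
    · intro j hj
      exact hc j (Finset.mem_Ico.mp hj).2
    · exact ⟨i, Finset.mem_Ico.mpr ⟨le_rfl, hi⟩⟩
  have hinv : ∀ i ≤ k, L i ≤ ∑ j ∈ Finset.Ico i k, m j := by
    intro i
    induction i with
    | zero =>
      intro _
      rw [hL0, ← Finset.range_eq_Ico]
      exact hmem
    | succ i ih =>
      intro hi
      have hik : i < k := hi
      have h1 := ih hik.le
      rw [Finset.sum_eq_sum_Ico_succ_bot hik] at h1
      rw [hLrec i hik, htw i hik]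
      rcases le_total (desW i) (m i) with h | h
      · rw [min_eq_left h]
        have hSi := hSpos i hik
        have hSS : S i = c i + S (i + 1) := by
          rw [hS i hik.le, hS (i + 1) hi, Finset.sum_eq_sum_Ico_succ_bot hik]
        have hd : desW i = c i * (L i / S i) := by
          rw [hdesW i hik, mul_div_assoc]
        have hL : L i = S i * (L i / S i) := by field_simp
        have hE : L i - desW i = ∑ j ∈ Finset.Ico (i + 1) k, c j * (L i / S i) := by
          rw [← Finset.sum_mul, ← hS (i + 1) hi, hd]
          nth_rewrite 1 [hL]
          nth_rewrite 1 [hSS]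
          ring
        rw [hE]
        apply Finset.sum_le_sum
        intro j hj
        obtain ⟨hj1, hj2⟩ := Finset.mem_Ico.mp hj
        have hs := hsorted i j (by omega) hj2
        rw [ge_iff_le, div_le_div_iff₀ (hm j hj2) (hm i hik)] at hs
        rw [hd] at h
        have hci := hc i hik
        have hcj := hc j hj2
        have h2 : c j * (c i * (L i / S i)) ≤ c j * m i :=
          mul_le_mul_of_nonneg_left h hcj.le
        have h3 : c i * (c j * (L i / S i)) ≤ c i * m j := by linarith
        exact le_of_mul_le_mul_left h3 hci
      · rw [min_eq_right h]
        linarith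
  obtain ⟨p, rfl⟩ : ∃ p, k = p + 1 := ⟨k - 1, by omega⟩
  have hp : p < p + 1 := Nat.lt_succ_self p
  have hdp : desW p = L p := by
    have h := hc p hp
    rw [hdesW p hp, hS p hp.le]
    simp
    field_simp
  have hLp := hinv p hp.le
  simp only [Nat.Ico_succ_singleton, Finset.sum_singleton] at hLp
  have hns : desW p ≤ m p := by rw [hdp]; exact hLp
  refine ⟨by simpa using hns, ?_⟩
  have htel : ∀ i ≤ p + 1, ∑ j ∈ Finset.range i, tw j = n - L i := by
    intro i
    induction i with
    | zero => intro _; simp [hL0]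
    | succ i ih =>
      intro hi
      rw [Finset.sum_range_succ, ih (by omega), hLrec i hi]
      ring
  rw [htel (p + 1) le_rfl, hLrec p hp, htw p hp, min_eq_left hns, hdp]
  ring
end

section
/- Optimality of the greedy block sizes (Theorem 1): assume the PUs are sorted and ∑_{i=0}^{k−1} m i ≥ n. Then for every feasible assignment w : Fin k → ℝ, i.e., 0 ≤ w i ≤ m i for all i and ∑_{i=0}^{k−1} w i = n, the greedy output minimizes the maximum normalized load: max_{0 ≤ i ≤ k−1} (tw i / c i) ≤ max_{0 ≤ i ≤ k−1} (w i / c i). -/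
theorem stmt_12
    (k : ℕ) (hk : 1 ≤ k) (n : ℝ) (hn : 0 < n)
    (c m : ℕ → ℝ)
    (hc : ∀ i < k, 0 < c i) (hm : ∀ i < k, 0 < m i)
    (S L desW tw : ℕ → ℝ)
    (hS : ∀ i ≤ k, S i = ∑ j ∈ Finset.Ico i k, c j)
    (hL0 : L 0 = n)
    (hdesW : ∀ i < k, desW i = c i * L i / S i)
    (htw : ∀ i < k, tw i = min (desW i) (m i))
    (hLrec : ∀ i < k, L (i + 1) = L i - tw i)
    (hsorted : ∀ i j, i ≤ j → j < k → c i / m i ≥ c j / m j)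
    (hmem : ∑ i ∈ Finset.range k, m i ≥ n)
    (w : ℕ → ℝ)
    (hw_feas : ∀ i < k, 0 ≤ w i ∧ w i ≤ m i)
    (hw_sum : ∑ i ∈ Finset.range k, w i = n) :
    (Finset.range k).sup' (Finset.nonempty_range_iff.mpr (by omega))
        (fun i => tw i / c i) ≤
    (Finset.range k).sup' (Finset.nonempty_range_iff.mpr (by omega))
        (fun i => w i / c i) := by
  set M := (Finset.range k).sup' (Finset.nonempty_range_iff.mpr (by omega))
        (fun i => w i / c i) with hM
  have hwM : ∀ i < k, w i ≤ M * c i := by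
    intro i hi
    have h : w i / c i ≤ M :=
      Finset.le_sup' (fun i => w i / c i) (Finset.mem_range.mpr hi)
    exact (div_le_iff₀ (hc i hi)).mp h
  have hSpos : ∀ i < k, 0 < S i := by
    intro i hi
    rw [hS i hi.le]
    apply Finset.sum_pos
    · intro j hj
      exact hc j (Finset.mem_Ico.mp hj).2
    · exact ⟨i, Finset.mem_Ico.mpr ⟨le_rfl, hi⟩⟩
  have hSsucc : ∀ i < k, S i = c i + S (i + 1) := by
    intro i hi
    rw [hS i hi.le, hS (i + 1) hi, Finset.sum_eq_sum_Ico_succ_bot hi]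
  have key : ∀ i, i ≤ k → L i ≤ ∑ j ∈ Finset.Ico i k, min (M * c j) (m j) := by
    intro i
    induction i with
    | zero =>
      intro _
      rw [hL0, ← hw_sum, ← Finset.range_eq_Ico]
      apply Finset.sum_le_sum
      intro j hj
      have hj' := Finset.mem_range.mp hj
      exact le_min (hwM j hj') (hw_feas j hj').2
    | succ i ih =>
      intro hi
      have hik : i < k := hi
      have h1 := ih hik.le
      rw [Finset.sum_eq_sum_Ico_succ_bot hik] at h1
      rw [hLrec i hik]
      by_cases hcase : min (M * c i) (m i) ≤ tw i
      · linarith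
      · push Not at hcase
        have ht1 : tw i < M * c i := lt_of_lt_of_le hcase (min_le_left _ _)
        have ht2 : tw i < m i := lt_of_lt_of_le hcase (min_le_right _ _)
        have hd : tw i = desW i := by
          rcases min_choice (desW i) (m i) with h | h
          · rw [htw i hik, h]
          · have := htw i hik
            rw [h] at this
            linarith
        have hSi := hSpos i hik
        obtain ⟨r, hr⟩ : ∃ r, r = L i / S i := ⟨_, rfl⟩
        have hLr : L i = r * S i := by rw [hr]; field_simp
        have htr : tw i = r * c i := by
          rw [hd, hdesW i hik, hr]; ring
        have hci := hc i hik
        have hrM : r ≤ M := by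
          rw [htr] at ht1
          exact (lt_of_mul_lt_mul_right ht1 hci.le).le
        have heq : L i - tw i = ∑ j ∈ Finset.Ico (i + 1) k, r * c j := by
          rw [← Finset.mul_sum, ← hS (i + 1) hi, hLr, htr, hSsucc i hik]; ring
        rw [heq]
        apply Finset.sum_le_sum
        intro j hj
        obtain ⟨hj1, hj2⟩ := Finset.mem_Ico.mp hj
        have hcj := hc j hj2
        refine le_min (mul_le_mul_of_nonneg_right hrM hcj.le) ?_
        have hs : c j / m j ≤ c i / m i := hsorted i j (by omega) hj2
        rw [div_le_div_iff₀ (hm j hj2) (hm i hik)] at hs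
        rw [htr] at ht2
        have h3 : r * c i * c j ≤ m i * c j := mul_le_mul_of_nonneg_right ht2.le hcj.le
        have h4 : c i * (r * c j) ≤ c i * m j := by linarith
        exact le_of_mul_le_mul_left h4 hci
  apply Finset.sup'_le
  intro i hi
  have hik := Finset.mem_range.mp hi
  have hci := hc i hik
  have hSi := hSpos i hik
  have hLM : L i ≤ M * S i := by
    refine (key i hik.le).trans ?_
    rw [hS i hik.le, Finset.mul_sum]
    exact Finset.sum_le_sum fun j _ => min_le_left _ _
  rw [div_le_iff₀ hci, htw i hik]
  refine (min_le_left _ _).trans ?_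
  rw [hdesW i hik, div_le_iff₀ hSi]
  have := mul_le_mul_of_nonneg_left hLM hci.le
  linarith
end

section
/- Assume the PUs are sorted and PU d (0 ≤ d ≤ k−1) is non-saturated. Then the common normalized load of the non-saturated PUs is at least the homogeneous ideal n / S 0: L d · S 0 ≥ n · S d, i.e., L d / S d ≥ n / S 0. -/
theorem stmt_13
    (k : ℕ) (hk : 1 ≤ k) (n : ℝ) (hn : 0 < n)
    (c m : ℕ → ℝ)
    (hc : ∀ i < k, 0 < c i) (hm : ∀ i < k, 0 < m i)
    (S L desW tw : ℕ → ℝ)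
    (hS : ∀ i ≤ k, S i = ∑ j ∈ Finset.Ico i k, c j)
    (hL0 : L 0 = n)
    (hdesW : ∀ i < k, desW i = c i * L i / S i)
    (htw : ∀ i < k, tw i = min (desW i) (m i))
    (hLrec : ∀ i < k, L (i + 1) = L i - tw i)
    (hsorted : ∀ i j, i ≤ j → j < k → c i / m i ≥ c j / m j)
    (d : ℕ) (hdk : d < k) (hd_nonsat : desW d ≤ m d) :
    L d * S 0 ≥ n * S d ∧ L d / S d ≥ n / S 0 := by
  have hpos : ∀ i < k, 0 < S i := by
    intro i hi
    rw [hS i hi.le]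
    apply Finset.sum_pos
    · intro j hj
      exact hc j (Finset.mem_Ico.mp hj).2
    · exact ⟨i, Finset.mem_Ico.mpr ⟨le_rfl, hi⟩⟩
  have hstep : ∀ i < k, S i = c i + S (i + 1) := by
    intro i hi
    rw [hS i hi.le, hS (i + 1) hi, Finset.sum_eq_sum_Ico_succ_bot hi]
  have main : ∀ i < k, n / S 0 ≤ L i / S i := by
    intro i
    induction i with
    | zero => intro _; rw [hL0]
    | succ i ih =>
      intro hi
      have hi' : i < k := by omega
      refine (ih hi').trans ?_
      have h1 : tw i ≤ c i * L i / S i := by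
        rw [htw i hi', ← hdesW i hi']
        exact min_le_left _ _
      have hp := hpos i hi'
      rw [le_div_iff₀ (hpos (i + 1) hi), hLrec i hi']
      have h2 : L i / S i * S (i + 1) = L i - c i * L i / S i := by
        have h3 : S (i + 1) = S i - c i := by linarith [hstep i hi']
        rw [h3]
        field_simp
      linarith
  have h0 := hpos 0 (by omega)
  have h := main d hdk
  refine ⟨?_, h⟩
  rwa [div_le_div_iff₀ h0 (hpos d hdk)] at h
end

section
/- Uniqueness of the proportional optimum: let n be a real number and let w : ι → ℝ satisfy ∑_{i∈ι} w i = n. Then max_{i∈ι} (w i / c i) = n / (∑_{j∈ι} c j) if and only if w i = n · c i / (∑_{j∈ι} c j) for every i ∈ ι. -/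
theorem stmt_16 {ι : Type*} [Fintype ι] [Nonempty ι]
    (c : ι → ℝ) (hc : ∀ i, 0 < c i) (n : ℝ)
    (w : ι → ℝ) (hw : (∑ i, w i) = n) :
    Finset.univ.sup' Finset.univ_nonempty (fun i => w i / c i) = n / (∑ j, c j) ↔
    ∀ i, w i = n * c i / (∑ j, c j) := by
  have hC : 0 < ∑ j, c j := Finset.sum_pos (fun i _ => hc i) Finset.univ_nonempty
  constructor
  · intro h
    have hle : ∀ i ∈ Finset.univ, w i ≤ n * c i / (∑ j, c j) := by
      intro i hi
      have h1 := Finset.le_sup' (fun i => w i / c i) hi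
      rw [h] at h1
      have h2 := (div_le_iff₀ (hc i)).1 h1
      rwa [div_mul_eq_mul_div] at h2
    have hs : ∑ i, w i = ∑ i, n * c i / (∑ j, c j) := by
      rw [← Finset.sum_div, ← Finset.mul_sum, hw, mul_div_assoc, div_self hC.ne', mul_one]
    intro i
    exact (Finset.sum_eq_sum_iff_of_le hle).1 hs i (Finset.mem_univ i)
  · intro h
    have h1 : (fun i => w i / c i) = fun _ => n / (∑ j, c j) := by
      funext i
      rw [h i, div_right_comm, mul_div_assoc, div_self (hc i).ne', mul_one]
    rw [h1, Finset.sup'_const]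
end
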